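/- Let a, b be finite tuples from L, let p be a Kolchin polynomial of (a,b) over K, q a Kolchin polynomial of a over K, and r a Kolchin polynomial of b over K⟨a⟩. If deg q > deg r, then deg p = deg q and leadingCoeff(p) = leadingCoeff(q); i.e., α((a,b)/K) = α(a/K). -/

import Mathlib

open Polynomial

/-- Iterated application of the derivations `δ` according to the multi-exponent `e`:
`x ↦ δ₁^[e 1] (δ₂^[e 2] (⋯ (δ_m^[e m] x)))`. -/
def thetaApply {L : Type*} {m : ℕ} (δ : Fin m → L → L) (e : Fin m → ℕ) : L → L :=
  (List.ofFn (fun i => (δ i)^[e i])).foldr (· ∘ ·) id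

/-- A subfield of `L` is a differential subfield if it is closed under each derivation. -/
def IsDiffSubfield {L : Type*} [Field L] {m : ℕ} (δ : Fin m → L → L) (K : Subfield L) : Prop :=
  ∀ i : Fin m, ∀ x ∈ K, δ i x ∈ K

/-- The transcendence degree (as a natural number) of an intermediate field over the base. -/
noncomputable def trdegNat {L : Type*} [Field L] (K : Subfield L) (E : IntermediateField K L) : ℕ :=
  (⨆ s : {s : Set E // AlgebraicIndependent K ((↑) : s → E)}, Cardinal.mk s.1).toNat

/-- `T_{η/K}(s)`: the transcendence degree over `K` of the subfield of `L` generated by `K`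
together with all `δ₁^(e 1) ⋯ δ_m^(e m) (η j)` with `e 1 + ⋯ + e m ≤ s`. -/
noncomputable def diffTrdeg {L : Type*} [Field L] {m n : ℕ} (δ : Fin m → L → L) (K : Subfield L)
    (η : Fin n → L) (s : ℕ) : ℕ :=
  trdegNat K (IntermediateField.adjoin K
    {x : L | ∃ e : Fin m → ℕ, (∑ i, e i) ≤ s ∧ ∃ j : Fin n, x = thetaApply δ e (η j)})

/-- `p` is a Kolchin polynomial of `η` over `K` if `p(s) = T_{η/K}(s)` for all large `s`. -/
def IsKolchinPoly {L : Type*} [Field L] {m n : ℕ} (δ : Fin m → L → L) (K : Subfield L)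
    (η : Fin n → L) (p : ℚ[X]) : Prop :=
  ∃ s₀ : ℕ, ∀ s : ℕ, s₀ ≤ s → p.eval (s : ℚ) = (diffTrdeg δ K η s : ℚ)

/-- `K⟨S⟩`: the smallest differential subfield of `L` containing `K` and `S`. -/
def diffAdjoin {L : Type*} [Field L] {m : ℕ} (δ : Fin m → L → L) (K : Subfield L)
    (S : Set L) : Subfield L :=
  sInf {F : Subfield L | IsDiffSubfield δ F ∧ K ≤ F ∧ S ⊆ F}

/-!
Order the derivatives `θ b_j` by an orderly ranking. A derivative of `b` that is algebraic over
`K⟨a⟩` and the lower derivatives of `b` is algebraic over `K`, those lower derivatives and the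
derivatives of `a` of order at most `ord θ + c` for some `c`. In characteristic zero such a relation
can be differentiated, which raises `ord θ` by one and keeps `c`; as `ℕ^m` is a well-quasi-order,
one `c` serves all `θ b_j`. Counting ranks derivative by derivative gives
`T_{a/K}(s) ≤ T_{(a,b)/K}(s) ≤ T_{a/K}(s + c) + T_{b/K⟨a⟩}(s)`,
and neither the shift by `c` nor the summand of smaller degree affects the leading term.
-/

section Polynomial

open Filter

theorem degree_taylor_sub_lt {R : Type*} [CommRing R] {q : R[X]} (hq : q ≠ 0) (c : R) :
    (taylor c q - q).degree < q.degree := by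
  rw [← degree_taylor q c]
  exact degree_sub_lt_left (degree_taylor q c) (by simpa using hq) (by simp)

variable {𝕜 : Type*} [NormedField 𝕜] [LinearOrder 𝕜] [IsStrictOrderedRing 𝕜] [OrderTopology 𝕜]
  [Archimedean 𝕜]

theorem leadingCoeff_nonneg_of_eventually_eval_natCast_nonneg {f : 𝕜[X]}
    (h : ∀ᶠ n : ℕ in atTop, 0 ≤ f.eval (n : 𝕜)) : 0 ≤ f.leadingCoeff := by
  by_contra! hlt
  rcases le_or_gt f.degree 0 with hd | hd
  · rw [eq_C_of_degree_le_zero hd] at h hlt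
    obtain ⟨n, hn⟩ := h.exists
    rw [eval_C] at hn
    rw [leadingCoeff_C] at hlt
    exact hlt.not_ge hn
  · have hbot := (f.tendsto_atBot_of_leadingCoeff_nonpos hd hlt.le).comp
      (tendsto_natCast_atTop_atTop (R := 𝕜))
    obtain ⟨n, hn, hn'⟩ := ((hbot.eventually_lt_atBot 0).and h).exists
    exact hn'.not_gt hn

theorem degree_le_degree_of_eventually_eval_natCast_le {f g : 𝕜[X]}
    (hf : ∀ᶠ n : ℕ in atTop, 0 ≤ f.eval (n : 𝕜))
    (hfg : ∀ᶠ n : ℕ in atTop, f.eval (n : 𝕜) ≤ g.eval (n : 𝕜)) : f.degree ≤ g.degree := by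
  by_contra! hlt
  have hpos : 0 ≤ f.leadingCoeff := leadingCoeff_nonneg_of_eventually_eval_natCast_nonneg hf
  have hneg : 0 ≤ (g - f).leadingCoeff :=
    leadingCoeff_nonneg_of_eventually_eval_natCast_nonneg (hfg.mono fun n hn => by simpa using hn)
  rw [← neg_sub, leadingCoeff_neg, leadingCoeff_sub_of_degree_lt hlt, neg_nonneg] at hneg
  exact ne_zero_of_degree_gt hlt (leadingCoeff_eq_zero.mp (hneg.antisymm hpos))

theorem degree_eq_and_leadingCoeff_eq_of_eventually_eval_natCast_le {p q r : 𝕜[X]} (c : 𝕜)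
    (hqp : ∀ᶠ n : ℕ in atTop, q.eval (n : 𝕜) ≤ p.eval (n : 𝕜))
    (hpq : ∀ᶠ n : ℕ in atTop, p.eval (n : 𝕜) ≤ q.eval (n + c) + r.eval (n : 𝕜))
    (hdeg : r.degree < q.degree) :
    p.degree = q.degree ∧ p.leadingCoeff = q.leadingCoeff := by
  have hle : (p - q).degree ≤ (taylor c q - q + r).degree :=
    degree_le_degree_of_eventually_eval_natCast_le
      (hqp.mono fun n hn => by simpa using hn)
      (hpq.mono fun n hn => by simp only [eval_add, eval_sub, taylor_eval]; linarith)
  have hlt : (p - q).degree < q.degree := hle.trans_lt <| (degree_add_le _ _).trans_lt <|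
    max_lt (degree_taylor_sub_lt (ne_zero_of_degree_gt hdeg) c) hdeg
  rw [← sub_add_cancel p q]
  exact ⟨degree_add_eq_right_of_degree_lt hlt, leadingCoeff_add_of_degree_lt hlt⟩

end Polynomial

section Order

theorem exists_forall_of_wellQuasiOrderedLE {α : Type*} [Preorder α] [WellQuasiOrderedLE α]
    {Q : ℕ → α → Prop} (hQ : Monotone Q) (hQα : ∀ c, Monotone (Q c)) :
    ∃ c, ∀ a, (∃ c', Q c' a) → Q c a := by
  by_contra! h
  choose a hex hnot using h
  choose d hd using hex
  obtain ⟨g, hg⟩ := wellQuasiOrdered_le.exists_monotone_subseq a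
  have hle : d (g 0) ≤ g (d (g 0)) := g.strictMono.le_apply
  exact hnot _ (hQ hle _ (hQα _ (hg _ _ (Nat.zero_le _)) (hd (g 0))))

theorem monotone_of_forall_add_single {σ : Type*} {P : (σ →₀ ℕ) → Prop}
    (h : ∀ e i, P e → P (e + Finsupp.single i 1)) : Monotone P := by
  suffices hadd : ∀ d e, P e → P (e + d) by
    intro e f hef he
    rw [← add_tsub_cancel_of_le hef]
    exact hadd _ _ he
  intro d
  induction d using Finsupp.induction_linear with
  | zero => intro e he; rwa [add_zero]
  | add d₁ d₂ h₁ h₂ => intro e he; rw [← add_assoc]; exact h₂ _ (h₁ _ he)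
  | single i k =>
    intro e he
    induction k with
    | zero => rwa [Finsupp.single_zero, add_zero]
    | succ k ih => rw [Finsupp.single_add, ← add_assoc]; exact h _ _ ih

end Order

section Matroid

theorem eRk_union_image_le {ι α : Type*} [LinearOrder ι] (M N : Matroid α) (v : ι → α)
    (A : Set α) (I : Finset ι) (hI : IsLowerSet (I : Set ι)) (hE : ∀ i ∈ I, v i ∈ N.E)
    (h : ∀ i ∈ I, v i ∈ N.closure (v '' Set.Iio i) → v i ∈ M.closure (A ∪ v '' Set.Iio i)) :
    M.eRk (A ∪ v '' I) ≤ M.eRk A + N.eRk (v '' I) := by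
  induction I using Finset.induction_on_max with
  | empty => simp
  | insert i I hi ih =>
    have hIio : (I : Set ι) = Set.Iio i := by
      ext j
      refine ⟨hi j, fun hj => ?_⟩
      exact Finset.mem_of_mem_insert_of_ne (hI hj.le (Finset.mem_insert_self i I)) hj.ne
    specialize ih (hIio ▸ isLowerSet_Iio i) (fun j hj => hE j (Finset.mem_insert_of_mem hj))
      fun j hj => h j (Finset.mem_insert_of_mem hj)
    specialize h i (Finset.mem_insert_self i I)
    rw [← hIio] at h
    rw [Finset.coe_insert, Set.image_insert_eq, Set.union_insert]
    by_cases hvi : v i ∈ N.closure (v '' I)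
    · calc M.eRk (insert (v i) (A ∪ v '' I)) = M.eRk (A ∪ v '' I) := by
            rw [← M.eRk_closure_eq, M.closure_insert_eq_of_mem_closure (h hvi), M.eRk_closure_eq]
        _ ≤ M.eRk A + N.eRk (v '' I) := ih
        _ ≤ M.eRk A + N.eRk (insert (v i) (v '' I)) := by
            gcongr
            exact N.eRk_mono (Set.subset_insert _ _)
    · calc M.eRk (insert (v i) (A ∪ v '' I)) ≤ M.eRk (A ∪ v '' I) + 1 :=
            M.eRk_insert_le_add_one _ _
        _ ≤ M.eRk A + N.eRk (v '' I) + 1 := by gcongr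
        _ = M.eRk A + N.eRk (insert (v i) (v '' I)) := by
            rw [Matroid.eRk_insert_eq_add_one ⟨hE i (Finset.mem_insert_self i I), hvi⟩, add_assoc]

end Matroid

section AlgebraicMatroid

open AlgebraicIndependent IntermediateField

variable {K L : Type*} [Field K] [Field L] [Algebra K L]

theorem mem_matroid_closure_iff_isAlgebraic_adjoin {S : Set L} {x : L} :
    x ∈ (matroid K L).closure S ↔ IsAlgebraic (adjoin K S) x := by
  rw [matroid_closure_eq, SetLike.mem_coe, isAlgebraic_adjoin_iff]
  rfl

theorem adjoin_subset_matroid_closure (S : Set L) :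
    (adjoin K S : Set L) ⊆ (matroid K L).closure S := fun x hx =>
  mem_matroid_closure_iff_isAlgebraic_adjoin.mpr (isAlgebraic_algebraMap (⟨x, hx⟩ : adjoin K S))

theorem matroid_closure_adjoin (S : Set L) :
    (matroid K L).closure (adjoin K S) = (matroid K L).closure S :=
  ((matroid K L).closure_subset_closure_of_subset_closure
    (adjoin_subset_matroid_closure S)).antisymm
    ((matroid K L).closure_subset_closure (subset_adjoin K S))

theorem matroid_comap_algHom {R A B : Type*} [CommRing R] [CommRing A] [CommRing B] [Algebra R A]
    [Algebra R B] [FaithfulSMul R A] [FaithfulSMul R B] [NoZeroDivisors A] [NoZeroDivisors B]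
    (f : A →ₐ[R] B) (hf : Function.Injective f) : (matroid R B).comap f = matroid R A := by
  refine Matroid.ext_indep (by simp) fun I _ => ?_
  rw [Matroid.comap_indep_iff, and_iff_left hf.injOn, matroid_indep_iff, matroid_indep_iff]
  exact (algebraicIndependent_image hf.injOn).symm.trans (f.algebraicIndependent_iff hf)

theorem trdeg_eq_cRk (E : IntermediateField K L) :
    Algebra.trdeg K E = (matroid K L).cRk E := by
  rw [← matroid_cRank_eq, ← matroid_comap_algHom E.val E.val.injective, ← Matroid.cRk_ground,
    Matroid.cRk_comap]
  simp

theorem trdeg_adjoin_eq_cRk (S : Set L) : Algebra.trdeg K (adjoin K S) = (matroid K L).cRk S := by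
  rw [trdeg_eq_cRk, Matroid.cRk_closure_congr (matroid_closure_adjoin S)]

theorem isAlgebraic_of_subfield_le {F G : Subfield L} (h : F ≤ G) {x : L} (hx : IsAlgebraic F x) :
    IsAlgebraic G x :=
  hx.ringHom_of_comp_eq (Subfield.inclusion h) (RingHom.id L) (Subfield.inclusion h).injective rfl

theorem mem_matroid_closure_union_of_le_adjoin {K F : Subfield L} {S T : Set L} {x : L}
    (hF : F ≤ (adjoin K S).toSubfield) (hx : x ∈ (matroid F L).closure T) :
    x ∈ (matroid K L).closure (S ∪ T) := by
  rw [mem_matroid_closure_iff_isAlgebraic_adjoin] at hx ⊢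
  refine isAlgebraic_of_subfield_le (F := (adjoin F T).toSubfield)
    (G := (adjoin K (S ∪ T)).toSubfield) (adjoin_le_subfield F T ?_ ?_) hx
  · rintro _ ⟨y, rfl⟩
    exact adjoin.mono K _ _ Set.subset_union_left (hF y.2)
  · exact Set.subset_union_right.trans (subset_adjoin K _)

end AlgebraicMatroid

section Derivation

open AlgebraicIndependent

variable {L : Type*} [Field L]

/-- The subfield of the elements of `E` that the derivation `D` maps into `E`; it reduces closure
of a field under `D` to closure of a set of generators. -/
def derivComap (D : Derivation ℤ L L) (E : Subfield L) : Subfield L where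
  carrier := {x | x ∈ E ∧ D x ∈ E}
  zero_mem' := ⟨zero_mem E, by rw [map_zero]; exact zero_mem E⟩
  one_mem' := ⟨one_mem E, by rw [D.map_one_eq_zero]; exact zero_mem E⟩
  add_mem' hx hy := ⟨add_mem hx.1 hy.1, by rw [map_add]; exact add_mem hx.2 hy.2⟩
  neg_mem' hx := ⟨neg_mem hx.1, by rw [map_neg]; exact neg_mem hx.2⟩
  mul_mem' hx hy := ⟨mul_mem hx.1 hy.1, by
    rw [D.leibniz]
    exact add_mem (mul_mem hx.1 hy.2) (mul_mem hy.1 hx.2)⟩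
  inv_mem' x hx := ⟨inv_mem hx.1, by
    rw [D.leibniz_inv]
    exact mul_mem (neg_mem (pow_mem (inv_mem hx.1) 2)) hx.2⟩

variable {D : Derivation ℤ L L} {E : Subfield L} {x : L}

theorem aeval_mem_of_derivComap (hx : x ∈ E) (Q : (derivComap D E)[X]) : aeval x Q ∈ E := by
  rw [aeval_eq_sum_range]
  exact sum_mem fun i _ => mul_mem (Q.coeff i).2.1 (pow_mem hx i)

theorem apply_aeval_sub_aeval_derivative_mul_mem (hx : x ∈ E) (Q : (derivComap D E)[X]) :
    D (aeval x Q) - aeval x (derivative Q) * D x ∈ E := by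
  induction Q using Polynomial.induction_on' with
  | add Q R hQ hR =>
    convert add_mem hQ hR using 1
    simp only [map_add]
    ring
  | monomial n a =>
    convert mul_mem (pow_mem hx n) a.2.2 using 1
    rw [derivative_monomial, aeval_monomial, aeval_monomial, D.leibniz, D.leibniz_pow]
    simp only [map_mul, map_natCast, smul_eq_mul, nsmul_eq_mul,
      Subfield.algebraMap_ofSubfield, Subfield.subtype_apply]
    ring

theorem apply_mem_of_isSeparable (hx : x ∈ E) (hsep : IsSeparable (derivComap D E) x) :
    D x ∈ E := by
  set P := minpoly (derivComap D E) x
  have hP : aeval x (derivative P) ≠ 0 := hsep.aeval_derivative_ne_zero (minpoly.aeval _ x)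
  have hmul := apply_aeval_sub_aeval_derivative_mul_mem hx P
  rw [minpoly.aeval, map_zero, zero_sub, neg_mem_iff] at hmul
  rw [← mul_div_cancel_left₀ (D x) hP]
  exact div_mem hmul (aeval_mem_of_derivComap hx _)

theorem apply_mem_matroid_closure [CharZero L] {K : Subfield L} (hK : ∀ y ∈ K, D y ∈ K)
    {S T : Set L} (hS : S ⊆ (matroid K L).closure T) (hDS : D '' S ⊆ (matroid K L).closure T)
    (hx : x ∈ (matroid K L).closure S) : D x ∈ (matroid K L).closure T := by
  let E := (algebraicClosure (IntermediateField.adjoin K T) L).toSubfield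
  have hE : ∀ {y}, y ∈ E ↔ y ∈ (matroid K L).closure T :=
    mem_algebraicClosure_iff.trans mem_matroid_closure_iff_isAlgebraic_adjoin.symm
  have hKE : ∀ y ∈ K, y ∈ E := fun y hy =>
    hE.mpr (adjoin_subset_matroid_closure T (IntermediateField.algebraMap_mem _ (⟨y, hy⟩ : K)))
  have hle : (IntermediateField.adjoin K S).toSubfield ≤ derivComap D E := by
    refine IntermediateField.adjoin_le_subfield K S ?_
      fun y hy => ⟨hE.mpr (hS hy), hE.mpr (hDS ⟨y, hy, rfl⟩)⟩
    rintro _ ⟨y, rfl⟩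
    exact ⟨hKE _ y.2, hKE _ (hK _ y.2)⟩
  have halg : IsAlgebraic (derivComap D E) x :=
    isAlgebraic_of_subfield_le hle (mem_matroid_closure_iff_isAlgebraic_adjoin.mp hx)
  exact hE.mp <| apply_mem_of_isSeparable
    (hE.mpr ((matroid K L).closure_subset_closure_of_subset_closure hS hx))
    (minpoly.irreducible halg.isIntegral).separable

end Derivation

/-- The indices `(e, j)` of the derivatives `θ^e η_j`, ordered by the orderly ranking: first by
`|e|`, then lexicographically by `e`, then by `j`. -/
abbrev DerivIndex (m n : ℕ) : Type := DegLex (Fin m →₀ ℕ) ×ₗ Fin n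

namespace DerivIndex

variable {m n : ℕ}

/-- The index `(e, j)` of `θ^e η_j`. -/
def mk (e : Fin m →₀ ℕ) (j : Fin n) : DerivIndex m n := toLex (toDegLex e, j)

/-- The exponent `e` of an index `(e, j)`. -/
def exponent (u : DerivIndex m n) : Fin m →₀ ℕ := ofDegLex (ofLex u).1

/-- The coordinate `j` of an index `(e, j)`. -/
def coord (u : DerivIndex m n) : Fin n := (ofLex u).2

/-- The index of the `i`-th derivative of the derivative with index `u`. -/
noncomputable def shift (i : Fin m) (u : DerivIndex m n) : DerivIndex m n :=
  mk (u.exponent + Finsupp.single i 1) u.coord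

theorem monotone_degree_exponent : Monotone fun u : DerivIndex m n => u.exponent.degree :=
  Finsupp.DegLex.monotone_degree.comp Prod.Lex.monotone_fst

theorem degree_exponent_shift (i : Fin m) (u : DerivIndex m n) :
    (u.shift i).exponent.degree = u.exponent.degree + 1 :=
  (map_add Finsupp.degree _ _).trans (by rw [Finsupp.degree_single])

theorem lt_shift (i : Fin m) (u : DerivIndex m n) : u < u.shift i := by
  refine Prod.Lex.lt_iff.mpr (Or.inl (Finsupp.DegLex.lt_iff.mpr (Or.inl ?_)))
  exact (Nat.lt_succ_self _).trans_eq (u.degree_exponent_shift i).symm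

theorem strictMono_shift (i : Fin m) : StrictMono (shift (n := n) i) := by
  intro u v huv
  rcases Prod.Lex.lt_iff.mp huv with h | ⟨h, h'⟩
  · exact Prod.Lex.lt_iff.mpr (Or.inl (add_lt_add_left h (toDegLex (Finsupp.single i 1))))
  · exact Prod.Lex.lt_iff.mpr (Or.inr ⟨congrArg (· + toDegLex (Finsupp.single i 1)) h, h'⟩)

theorem finite_setOf_degree_exponent_le (s : ℕ) :
    {u : DerivIndex m n | u.exponent.degree ≤ s}.Finite := by
  refine (((Finsupp.finite_of_degree_le s).prod Set.finite_univ).image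
    fun x : (Fin m →₀ ℕ) × Fin n => mk x.1 x.2).subset ?_
  exact fun u hu => ⟨(u.exponent, u.coord), ⟨hu, Set.mem_univ _⟩, rfl⟩

end DerivIndex

section Theta

variable {L : Type*}

theorem thetaApply_zero_exponent {m : ℕ} (δ : Fin m → L → L) (x : L) : thetaApply δ 0 x = x := by
  induction m with
  | zero => rfl
  | succ m ih => simpa [thetaApply, List.ofFn_succ] using ih fun k => δ k.succ

theorem thetaApply_succ {m : ℕ} (δ : Fin (m + 1) → L → L) (e : Fin (m + 1) → ℕ) (x : L) :
    thetaApply δ e x = (δ 0)^[e 0] (thetaApply (Fin.tail δ) (Fin.tail e) x) := by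
  simp [thetaApply, List.ofFn_succ, Fin.tail]

theorem thetaApply_add_single {m : ℕ} {δ : Fin m → L → L}
    (hδ : ∀ i j, Function.Commute (δ i) (δ j)) (e : Fin m → ℕ) (i : Fin m) (x : L) :
    thetaApply δ (e + Pi.single i 1) x = δ i (thetaApply δ e x) := by
  induction m with
  | zero => exact i.elim0
  | succ m ih =>
    rw [thetaApply_succ, thetaApply_succ]
    cases i using Fin.cases with
    | zero =>
      have htail : Fin.tail (e + Pi.single 0 1) = Fin.tail e := by ext; simp [Fin.tail]
      simp [htail, Function.iterate_succ_apply']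
    | succ k =>
      have htail : Fin.tail (e + Pi.single k.succ 1) = Fin.tail e + Pi.single k 1 := by
        ext; simp [Fin.tail, Pi.single_apply]
      have hcomm := (hδ k.succ 0).iterate_right (e 0)
      rw [htail, ih (δ := Fin.tail δ) fun i j => hδ i.succ j.succ]
      simpa [Fin.tail] using (hcomm _).symm

variable {m n : ℕ} (δ : Fin m → L → L) (η : Fin n → L)

/-- The derivative `θ^e η_j` of index `u = (e, j)`. -/
def thetaVal (u : DerivIndex m n) : L := thetaApply δ u.exponent (η u.coord)

/-- The set of the derivatives of `η` of order at most `s`, spelled as in `diffTrdeg`. -/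
def thetaSet (s : ℕ) : Set L :=
  {x : L | ∃ e : Fin m → ℕ, (∑ i, e i) ≤ s ∧ ∃ j : Fin n, x = thetaApply δ e (η j)}

theorem thetaSet_eq_image (s : ℕ) :
    thetaSet δ η s = thetaVal δ η '' {u | u.exponent.degree ≤ s} := by
  ext x
  constructor
  · rintro ⟨e, he, j, rfl⟩
    refine ⟨.mk (Finsupp.equivFunOnFinite.symm e) j, ?_, rfl⟩
    exact (Finsupp.degree_eq_sum (Finsupp.equivFunOnFinite.symm e)).trans_le he
  · rintro ⟨u, hu, rfl⟩
    exact ⟨u.exponent, (Finsupp.degree_eq_sum _).symm.trans_le hu, u.coord, rfl⟩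

theorem thetaSet_finite (s : ℕ) : (thetaSet δ η s).Finite := by
  rw [thetaSet_eq_image]
  exact (DerivIndex.finite_setOf_degree_exponent_le s).image _

theorem thetaSet_mono : Monotone (thetaSet δ η) :=
  fun _ _ hst _ ⟨e, he, h⟩ => ⟨e, he.trans hst, h⟩

theorem mem_thetaSet_zero (j : Fin n) : η j ∈ thetaSet δ η 0 :=
  ⟨0, by simp, j, (thetaApply_zero_exponent δ (η j)).symm⟩

theorem thetaSet_append {n₁ n₂ : ℕ} (a : Fin n₁ → L) (b : Fin n₂ → L) (s : ℕ) :
    thetaSet δ (Fin.append a b) s = thetaSet δ a s ∪ thetaSet δ b s := by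
  ext x
  constructor
  · rintro ⟨e, he, j, rfl⟩
    cases j using Fin.addCases with
    | left j => exact Or.inl ⟨e, he, j, by rw [Fin.append_left]⟩
    | right j => exact Or.inr ⟨e, he, j, by rw [Fin.append_right]⟩
  · rintro (⟨e, he, j, rfl⟩ | ⟨e, he, j, rfl⟩)
    · exact ⟨e, he, Fin.castAdd n₂ j, by rw [Fin.append_left]⟩
    · exact ⟨e, he, Fin.natAdd n₁ j, by rw [Fin.append_right]⟩

variable {δ}

theorem thetaVal_shift (hδ : ∀ i j, Function.Commute (δ i) (δ j)) (i : Fin m)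
    (u : DerivIndex m n) : thetaVal δ η (u.shift i) = δ i (thetaVal δ η u) := by
  rw [thetaVal, thetaVal, ← thetaApply_add_single hδ, ← Finsupp.single_eq_pi_single]
  rfl

theorem image_thetaSet_subset (hδ : ∀ i j, Function.Commute (δ i) (δ j)) (i : Fin m) (s : ℕ) :
    δ i '' thetaSet δ η s ⊆ thetaSet δ η (s + 1) := by
  rw [thetaSet_eq_image, thetaSet_eq_image]
  rintro _ ⟨_, ⟨u, hu, rfl⟩, rfl⟩
  exact ⟨u.shift i, (u.degree_exponent_shift i).trans_le (Nat.succ_le_succ hu),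
    thetaVal_shift η hδ i u⟩

end Theta

/-- The maps `δ i` are pairwise commuting derivations of the field `L`. -/
structure IsCommutingDerivations {L : Type*} [Field L] {m : ℕ} (δ : Fin m → L → L) : Prop where
  map_add : ∀ i x y, δ i (x + y) = δ i x + δ i y
  leibniz : ∀ i x y, δ i (x * y) = x * δ i y + δ i x * y
  commute : ∀ i j, Function.Commute (δ i) (δ j)

/-- The map `δ i` as a bundled derivation. -/
def IsCommutingDerivations.derivation {L : Type*} [Field L] {m : ℕ} {δ : Fin m → L → L}
    (hδ : IsCommutingDerivations δ) (i : Fin m) : Derivation ℤ L L :=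
  Derivation.mk' (AddMonoidHom.mk' (δ i) (hδ.map_add i)).toIntLinearMap fun x y =>
    (hδ.leibniz i x y).trans (by rw [mul_comm (δ i x)]; rfl)

section DifferentialField

open AlgebraicIndependent IntermediateField

variable {L : Type*} [Field L] {m n n₁ n₂ : ℕ} {δ : Fin m → L → L} {K : Subfield L}

theorem natCast_diffTrdeg (δ : Fin m → L → L) (K : Subfield L) (η : Fin n → L) (s : ℕ) :
    (diffTrdeg δ K η s : ℕ∞) = (matroid K L).eRk (thetaSet δ η s) := by
  change ((Algebra.trdeg K (adjoin K (thetaSet δ η s))).toNat : ℕ∞) = _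
  rw [trdeg_adjoin_eq_cRk, ← Cardinal.toNat_toENat, Matroid.toENat_cRk_eq, ENat.natCast_toNat]
  exact ((Matroid.eRk_le_encard _ _).trans_lt (thetaSet_finite δ η s).encard_lt_top).ne

theorem diffTrdeg_le_diffTrdeg_append (δ : Fin m → L → L) (K : Subfield L) (a : Fin n₁ → L)
    (b : Fin n₂ → L) (s : ℕ) : diffTrdeg δ K a s ≤ diffTrdeg δ K (Fin.append a b) s := by
  rw [← ENat.natCast_le_natCast, natCast_diffTrdeg, natCast_diffTrdeg, thetaSet_append]
  exact Matroid.eRk_mono _ Set.subset_union_left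

theorem diffAdjoin_range_le_adjoin_iUnion_thetaSet (hδ : IsCommutingDerivations δ)
    (hK : IsDiffSubfield δ K) (η : Fin n → L) :
    diffAdjoin δ K (Set.range η) ≤ (adjoin K (⋃ s, thetaSet δ η s)).toSubfield := by
  set E := (adjoin K (⋃ s, thetaSet δ η s)).toSubfield
  have hKE : K ≤ E := fun x hx => IntermediateField.algebraMap_mem _ (⟨x, hx⟩ : K)
  have hE : ∀ s, thetaSet δ η s ⊆ E := fun s =>
    (Set.subset_iUnion _ s).trans (subset_adjoin K _)
  have hstable : IsDiffSubfield δ E := by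
    intro i
    suffices h : E ≤ derivComap (hδ.derivation i) E from fun x hx => (h hx).2
    refine adjoin_le_subfield K _ ?_ (Set.iUnion_subset fun s x hx => ⟨hE s hx, ?_⟩)
    · rintro _ ⟨x, rfl⟩
      exact ⟨hKE x.2, hKE (hK i x x.2)⟩
    · exact hE (s + 1) (image_thetaSet_subset η hδ.commute i s ⟨x, hx, rfl⟩)
  exact sInf_le ⟨hstable, hKE, Set.range_subset_iff.mpr fun j => hE 0 (mem_thetaSet_zero δ η j)⟩

theorem exists_mem_matroid_closure_thetaSet_union (hδ : IsCommutingDerivations δ)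
    (hK : IsDiffSubfield δ K) (η : Fin n → L) {T : Set L} {x : L}
    (hx : x ∈ (matroid (diffAdjoin δ K (Set.range η)) L).closure T) :
    ∃ c, x ∈ (matroid K L).closure (thetaSet δ η c ∪ T) := by
  obtain ⟨I, hI, hIfin, -, hxI⟩ := Matroid.exists_mem_finite_closure_of_mem_closure
    (mem_matroid_closure_union_of_le_adjoin
      (diffAdjoin_range_le_adjoin_iUnion_thetaSet hδ hK η) hx)
  rw [Set.iUnion_union] at hI
  have hdir : Directed (· ⊆ ·) fun c => thetaSet δ η c ∪ T :=
    Monotone.directed_le fun _ _ h => Set.union_subset_union_left T (thetaSet_mono δ η h)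
  obtain ⟨c, hc⟩ := hdir.exists_mem_subset_of_finset_subset_biUnion (s := hIfin.toFinset)
    (by rwa [hIfin.coe_toFinset])
  rw [hIfin.coe_toFinset] at hc
  exact ⟨c, Matroid.closure_subset_closure _ hc hxI⟩

variable [CharZero L] (a : Fin n₁ → L) (b : Fin n₂ → L)

theorem thetaVal_shift_mem_matroid_closure (hδ : IsCommutingDerivations δ)
    (hK : IsDiffSubfield δ K) (i : Fin m) {s : ℕ} {u : DerivIndex m n₂}
    (h : thetaVal δ b u ∈ (matroid K L).closure (thetaSet δ a s ∪ thetaVal δ b '' Set.Iio u)) :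
    thetaVal δ b (u.shift i) ∈
      (matroid K L).closure (thetaSet δ a (s + 1) ∪ thetaVal δ b '' Set.Iio (u.shift i)) := by
  have hsub : thetaSet δ a s ∪ thetaVal δ b '' Set.Iio u ⊆
      thetaSet δ a (s + 1) ∪ thetaVal δ b '' Set.Iio (u.shift i) :=
    Set.union_subset_union (thetaSet_mono δ a s.le_succ)
      (Set.image_mono (Set.Iio_subset_Iio (u.lt_shift i).le))
  have hδsub : δ i '' (thetaSet δ a s ∪ thetaVal δ b '' Set.Iio u) ⊆
      thetaSet δ a (s + 1) ∪ thetaVal δ b '' Set.Iio (u.shift i) := by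
    rw [Set.image_union]
    refine Set.union_subset_union (image_thetaSet_subset a hδ.commute i s) ?_
    rintro _ ⟨_, ⟨v, hv, rfl⟩, rfl⟩
    exact ⟨v.shift i, DerivIndex.strictMono_shift i hv, thetaVal_shift b hδ.commute i v⟩
  have hcl := (matroid K L).subset_closure
    (thetaSet δ a (s + 1) ∪ thetaVal δ b '' Set.Iio (u.shift i)) (Set.subset_univ _)
  rw [thetaVal_shift b hδ.commute]
  exact apply_mem_matroid_closure (D := hδ.derivation i) (hK i) (hsub.trans hcl)
    (hδsub.trans hcl) h

theorem exists_forall_thetaVal_mem_matroid_closure (hδ : IsCommutingDerivations δ)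
    (hK : IsDiffSubfield δ K) :
    ∃ c, ∀ u : DerivIndex m n₂,
      thetaVal δ b u ∈ (matroid (diffAdjoin δ K (Set.range a)) L).closure
        (thetaVal δ b '' Set.Iio u) →
      thetaVal δ b u ∈ (matroid K L).closure
        (thetaSet δ a (u.exponent.degree + c) ∪ thetaVal δ b '' Set.Iio u) := by
  let Q (j : Fin n₂) (c : ℕ) (e : Fin m →₀ ℕ) : Prop := thetaVal δ b (.mk e j) ∈
    (matroid K L).closure (thetaSet δ a (e.degree + c) ∪ thetaVal δ b '' Set.Iio (.mk e j))
  have hQ (j : Fin n₂) : Monotone (Q j) := fun c d hcd e he =>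
    (matroid K L).closure_subset_closure
      (Set.union_subset_union_left _ (thetaSet_mono δ a (Nat.add_le_add_left hcd _))) he
  have hQα (j : Fin n₂) (c : ℕ) : Monotone (Q j c) := by
    refine monotone_of_forall_add_single fun e i he => ?_
    have h := thetaVal_shift_mem_matroid_closure a b hδ hK i he
    have hdeg : (e + Finsupp.single i 1).degree = e.degree + 1 :=
      DerivIndex.degree_exponent_shift i (.mk e j)
    rwa [add_right_comm, ← hdeg] at h
  choose c hc using fun j => exists_forall_of_wellQuasiOrderedLE (hQ j) (hQα j)
  obtain ⟨C, hC⟩ := Finite.exists_le c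
  refine ⟨C, fun u hu => hQ u.coord (hC _) _ (hc u.coord u.exponent ?_)⟩
  obtain ⟨d, hd⟩ := exists_mem_matroid_closure_thetaSet_union hδ hK a hu
  exact ⟨d, (matroid K L).closure_subset_closure
    (Set.union_subset_union_left _ (thetaSet_mono δ a (Nat.le_add_left d _))) hd⟩

theorem exists_diffTrdeg_append_le (hδ : IsCommutingDerivations δ) (hK : IsDiffSubfield δ K) :
    ∃ c, ∀ s, diffTrdeg δ K (Fin.append a b) s ≤
      diffTrdeg δ K a (s + c) + diffTrdeg δ (diffAdjoin δ K (Set.range a)) b s := by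
  obtain ⟨c, hc⟩ := exists_forall_thetaVal_mem_matroid_closure a b hδ hK
  refine ⟨c, fun s => ?_⟩
  let I := (DerivIndex.finite_setOf_degree_exponent_le (m := m) (n := n₂) s).toFinset
  have hI : (I : Set (DerivIndex m n₂)) = {u | u.exponent.degree ≤ s} := Set.Finite.coe_toFinset _
  have hlower : IsLowerSet (I : Set (DerivIndex m n₂)) := by
    rw [hI]
    exact (isLowerSet_Iic s).preimage DerivIndex.monotone_degree_exponent
  have hb : thetaVal δ b '' I = thetaSet δ b s := by rw [hI, thetaSet_eq_image]
  have hrank := eRk_union_image_le (matroid K L) (matroid (diffAdjoin δ K (Set.range a)) L)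
    (thetaVal δ b) (thetaSet δ a (s + c)) I hlower (fun _ _ => Set.mem_univ _) fun u hu h =>
      (matroid K L).closure_subset_closure (Set.union_subset_union_left _
        (thetaSet_mono δ a (Nat.add_le_add_right (hI.subset hu) c))) (hc u h)
  rw [hb] at hrank
  rw [← ENat.natCast_le_natCast, ENat.natCast_add, natCast_diffTrdeg, natCast_diffTrdeg,
    natCast_diffTrdeg, thetaSet_append]
  exact ((matroid K L).eRk_mono
    (Set.union_subset_union_left _ (thetaSet_mono δ a (Nat.le_add_right s c)))).trans hrank

end DifferentialField

/-- If `τ(a/K) > τ(b/K⟨a⟩)` then `τ((a,b)/K) = τ(a/K)` and `α((a,b)/K) = α(a/K)`. -/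
theorem typical_dimension_of_gt_type
    {L : Type*} [Field L] [CharZero L] {m : ℕ} (hm : 1 ≤ m)
    (δ : Fin m → L → L)
    (hadd : ∀ i : Fin m, ∀ x y : L, δ i (x + y) = δ i x + δ i y)
    (hleib : ∀ i : Fin m, ∀ x y : L, δ i (x * y) = x * δ i y + δ i x * y)
    (hcomm : ∀ i j : Fin m, ∀ x : L, δ i (δ j x) = δ j (δ i x))
    (K : Subfield L) (hK : IsDiffSubfield δ K)
    {n₁ n₂ : ℕ} (a : Fin n₁ → L) (b : Fin n₂ → L)
    (p q r : ℚ[X])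
    (hp : IsKolchinPoly δ K (Fin.append a b) p)
    (hq : IsKolchinPoly δ K a q)
    (hr : IsKolchinPoly δ (diffAdjoin δ K (Set.range a)) b r)
    (hdeg : r.degree < q.degree) :
    p.degree = q.degree ∧ p.leadingCoeff = q.leadingCoeff := by
  have hδ : IsCommutingDerivations δ := ⟨hadd, hleib, hcomm⟩
  obtain ⟨c, hc⟩ := exists_diffTrdeg_append_le a b hδ hK
  obtain ⟨N₁, hp⟩ := hp
  obtain ⟨N₂, hq⟩ := hq
  obtain ⟨N₃, hr⟩ := hr
  refine degree_eq_and_leadingCoeff_eq_of_eventually_eval_natCast_le (c : ℚ) ?_ ?_ hdeg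
  · filter_upwards [Filter.eventually_ge_atTop N₁, Filter.eventually_ge_atTop N₂] with s h₁ h₂
    rw [hp s h₁, hq s h₂]
    exact_mod_cast diffTrdeg_le_diffTrdeg_append δ K a b s
  · filter_upwards [Filter.eventually_ge_atTop N₁, Filter.eventually_ge_atTop N₂,
      Filter.eventually_ge_atTop N₃] with s h₁ h₂ h₃
    rw [hp s h₁, hr s h₃, ← Nat.cast_add, hq (s + c) (h₂.trans (Nat.le_add_right s c))]
    exact_mod_cast hc s
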